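/- For all integers r, l with 0 ≤ 2r ≤ n and l > 2r one has Λ π_{l,r} = (l−2r)·(2n−2r−l+1)·π_{l−1,r} in M (and Λ π_{2r,r} = 0). -/

import Mathlib

/-- Valid basis indices: pairs `(k,p)` of integers with `0 ≤ p` and `2p ≤ k`. -/
def Idx : Type := { x : ℤ × ℤ // 0 ≤ x.2 ∧ 2 * x.2 ≤ x.1 }

/-- The free real vector space on the basis `{e_{k,p} : 0 ≤ 2p ≤ k}`. -/
abbrev M : Type := Idx →₀ ℝ

/-- The basis vector `e_{k,p}`, with the convention that it is `0` for invalid indices. -/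
noncomputable def e (k p : ℤ) : M :=
  if h : 0 ≤ p ∧ 2 * p ≤ k then Finsupp.single ⟨(k, p), h⟩ 1 else 0

/-- `L e_{k,p} = (k - 2p + 1) e_{k+1,p}`. -/
noncomputable def opL : M →ₗ[ℝ] M :=
  Finsupp.lsum ℝ fun v => LinearMap.toSpanSingleton ℝ M
    (((v.1.1 - 2 * v.1.2 + 1 : ℤ) : ℝ) • e (v.1.1 + 1) v.1.2)

/-- `Λ e_{k,p} = (2n - 2p - k + 1) e_{k-1,p} + (k - 2p + 1) e_{k-1,p-1}`. -/
noncomputable def opLam (n : ℕ) : M →ₗ[ℝ] M :=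
  Finsupp.lsum ℝ fun v => LinearMap.toSpanSingleton ℝ M
    ((((2 * (n : ℤ) - 2 * v.1.2 - v.1.1 + 1 : ℤ) : ℝ)) • e (v.1.1 - 1) v.1.2 +
      (((v.1.1 - 2 * v.1.2 + 1 : ℤ) : ℝ)) • e (v.1.1 - 1) (v.1.2 - 1))

/-- `H e_{k,p} = (2k - 2n) e_{k,p}`. -/
noncomputable def opH (n : ℕ) : M →ₗ[ℝ] M :=
  Finsupp.lsum ℝ fun v => LinearMap.toSpanSingleton ℝ M
    (((2 * v.1.1 - 2 * (n : ℤ) : ℤ) : ℝ) • e v.1.1 v.1.2)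

/-- The primitive element
`π_{2r,r} = (-1)^r (2n-4r+1)!! ∑_{i=0}^r (-1)^i ((2r-2i-1)!!/(2n-2r-2i+1)!!) e_{2r,i}`.
(Note `(2r-2i-1)` is truncated natural subtraction, so for `i = r` the numerator is
`0‼ = 1`, matching the convention `(-1)!! = 1`.) -/
noncomputable def piBase (n r : ℕ) : M :=
  ((-1 : ℝ) ^ r * (Nat.doubleFactorial (2 * n - 4 * r + 1) : ℝ)) •
    ∑ i ∈ Finset.range (r + 1),
      ((-1 : ℝ) ^ i * (Nat.doubleFactorial (2 * r - 2 * i - 1) : ℝ) /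
          (Nat.doubleFactorial (2 * n - 2 * r - 2 * i + 1) : ℝ)) •
        e (2 * r : ℤ) (i : ℤ)

/-- `π_{k,r} := L^(k-2r) π_{2r,r}`. -/
noncomputable def piElt (n k r : ℕ) : M := (opL ^ (k - 2 * r)) (piBase n r)

/-!
The operators `H`, `L`, `Λ` form an `sl₂` triple, so the formula is the action of the lowering
operator `Λ` on the string `L ^ m π` generated by a nonzero `π` with `Λ π = 0` and
`H π = (4 r - 2 n) π`. That `π_{2r,r}` is killed by `Λ` is a telescoping sum: the two components of
`Λ e_{2r,i}` and `Λ e_{2r,i+1}` along `e_{2r-1,i}` cancel, because consecutive coefficients of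
`π_{2r,r}` have ratio `-(2n-2r-2i+1) / (2r-2i-1)`.
-/

/-- The index of the basis vector `e_{k,p}`. It is a separate constructor because `Idx` does not
unfold to its subtype at the transparency used by `rw`, which blocks anonymous constructors. -/
def Idx.mk {k p : ℤ} (h : 0 ≤ p ∧ 2 * p ≤ k) : Idx :=
  ⟨(k, p), h⟩

theorem Idx.mk_inj {k p k' p' : ℤ} {h : 0 ≤ p ∧ 2 * p ≤ k} {h' : 0 ≤ p' ∧ 2 * p' ≤ k'} :
    Idx.mk h = Idx.mk h' ↔ k = k' ∧ p = p' :=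
  Subtype.mk_eq_mk.trans Prod.mk_inj

theorem e_eq_single {k p : ℤ} (h : 0 ≤ p ∧ 2 * p ≤ k) : e k p = Finsupp.single (Idx.mk h) 1 :=
  dif_pos h

theorem e_eq_zero {k p : ℤ} (h : ¬(0 ≤ p ∧ 2 * p ≤ k)) : e k p = 0 :=
  dif_neg h

theorem e_apply_mk (k p : ℤ) {k' p' : ℤ} (h' : 0 ≤ p' ∧ 2 * p' ≤ k') :
    e k p (Idx.mk h') = if k = k' ∧ p = p' then 1 else 0 := by
  classical
  by_cases h : 0 ≤ p ∧ 2 * p ≤ k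
  · rw [e_eq_single h, Finsupp.single_apply]
    exact if_congr Idx.mk_inj rfl rfl
  · rw [e_eq_zero h, if_neg (by rintro ⟨rfl, rfl⟩; exact h h'), Finsupp.zero_apply]

theorem linearMap_ext_e {V : Type*} [AddCommMonoid V] [Module ℝ V] {f g : M →ₗ[ℝ] V}
    (h : ∀ k p : ℤ, f (e k p) = g (e k p)) : f = g := by
  refine Finsupp.lhom_ext' fun ⟨⟨k, p⟩, hkp⟩ => LinearMap.ext_ring ?_
  have he := h k p
  rw [e_eq_single hkp] at he
  exact he

theorem lsum_toSpanSingleton_e {V : Type*} [AddCommMonoid V] [Module ℝ V] (F : ℤ → ℤ → V)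
    {k p : ℤ} (hF : ¬(0 ≤ p ∧ 2 * p ≤ k) → F k p = 0) :
    Finsupp.lsum ℝ (fun v : Idx => LinearMap.toSpanSingleton ℝ V (F v.1.1 v.1.2)) (e k p) =
      F k p := by
  by_cases h : 0 ≤ p ∧ 2 * p ≤ k
  · rw [e_eq_single h]
    exact (Finsupp.lsum_single ..).trans (one_smul ..)
  · rw [e_eq_zero h, map_zero, hF h]

theorem opL_e (k p : ℤ) : opL (e k p) = ((k - 2 * p + 1 : ℤ) : ℝ) • e (k + 1) p := by
  refine lsum_toSpanSingleton_e (fun k p => ((k - 2 * p + 1 : ℤ) : ℝ) • e (k + 1) p) fun h => ?_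
  obtain hc | hc := eq_or_ne (k - 2 * p + 1) 0
  · rw [hc, Int.cast_zero, zero_smul]
  · rw [e_eq_zero (by omega), smul_zero]

theorem opLam_e (n : ℕ) (k p : ℤ) :
    opLam n (e k p) = ((2 * (n : ℤ) - 2 * p - k + 1 : ℤ) : ℝ) • e (k - 1) p +
      ((k - 2 * p + 1 : ℤ) : ℝ) • e (k - 1) (p - 1) := by
  refine lsum_toSpanSingleton_e (fun k p => ((2 * (n : ℤ) - 2 * p - k + 1 : ℤ) : ℝ) • e (k - 1) p +
    ((k - 2 * p + 1 : ℤ) : ℝ) • e (k - 1) (p - 1)) fun h => ?_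
  rw [e_eq_zero (k := k - 1) (p := p) (by omega), smul_zero, zero_add]
  obtain hc | hc := eq_or_ne (k - 2 * p + 1) 0
  · rw [hc, Int.cast_zero, zero_smul]
  · rw [e_eq_zero (by omega), smul_zero]

theorem opH_e (n : ℕ) (k p : ℤ) :
    opH n (e k p) = ((2 * k - 2 * (n : ℤ) : ℤ) : ℝ) • e k p :=
  lsum_toSpanSingleton_e (fun k p => ((2 * k - 2 * (n : ℤ) : ℤ) : ℝ) • e k p) fun h => by
    rw [e_eq_zero h, smul_zero]

theorem opH_ne_zero (n : ℕ) : opH n ≠ 0 := by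
  intro h
  have hval : opH n (e (n + 1) 0) (Idx.mk (k := n + 1) (p := 0) (by omega)) = 2 := by
    rw [opH_e, Finsupp.smul_apply, e_apply_mk, if_pos ⟨rfl, rfl⟩]
    push_cast
    ring
  simp [h] at hval

theorem lie_opL_opLam (n : ℕ) : ⁅opL, opLam n⁆ = opH n := by
  refine linearMap_ext_e fun k p => ?_
  simp only [Ring.lie_def, LinearMap.sub_apply, Module.End.mul_apply, opL_e, opLam_e, opH_e,
    map_add, map_smul, sub_add_cancel, add_sub_cancel_right]
  push_cast
  module

theorem lie_opH_opL (n : ℕ) : ⁅opH n, opL⁆ = 2 • opL := by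
  refine linearMap_ext_e fun k p => ?_
  simp only [Ring.lie_def, LinearMap.sub_apply, LinearMap.smul_apply, Module.End.mul_apply, opL_e,
    opH_e, map_smul]
  push_cast
  module

theorem lie_opH_opLam (n : ℕ) : ⁅opH n, opLam n⁆ = -(2 • opLam n) := by
  refine linearMap_ext_e fun k p => ?_
  simp only [Ring.lie_def, LinearMap.sub_apply, LinearMap.neg_apply, LinearMap.smul_apply,
    Module.End.mul_apply, opLam_e, opH_e, map_add, map_smul]
  push_cast
  module

/-- The coefficient of `e_{2r,i}` in `π_{2r,r}`, up to the factor `(-1)^r (2n-4r+1)!!` that does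
not depend on `i`. As in `piBase`, truncated subtraction encodes `(-1)!! = 1`. -/
noncomputable def piCoeff (n r i : ℕ) : ℝ :=
  (-1) ^ i * (Nat.doubleFactorial (2 * r - 2 * i - 1) : ℝ) /
    (Nat.doubleFactorial (2 * n - 2 * r - 2 * i + 1) : ℝ)

theorem piBase_eq_smul_sum_piCoeff (n r : ℕ) :
    piBase n r = ((-1 : ℝ) ^ r * (Nat.doubleFactorial (2 * n - 4 * r + 1) : ℝ)) •
      ∑ i ∈ Finset.range (r + 1), piCoeff n r i • e (2 * r) i :=
  rfl

theorem cast_doubleFactorial_ne_zero (m : ℕ) : (Nat.doubleFactorial m : ℝ) ≠ 0 :=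
  Nat.cast_ne_zero.2 (Nat.doubleFactorial_pos m).ne'

theorem piCoeff_ne_zero (n r i : ℕ) : piCoeff n r i ≠ 0 :=
  div_ne_zero (mul_ne_zero (pow_ne_zero _ (by norm_num)) (cast_doubleFactorial_ne_zero _))
    (cast_doubleFactorial_ne_zero _)

theorem piCoeff_succ_mul {n r i : ℕ} (hrn : 2 * r ≤ n) (hi : i < r) :
    piCoeff n r (i + 1) * (2 * r - 2 * i - 1) =
      -(piCoeff n r i * (2 * n - 2 * r - 2 * i + 1)) := by
  have hnum : (Nat.doubleFactorial (2 * r - 2 * i - 1) : ℝ) =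
      (2 * r - 2 * i - 1) * (Nat.doubleFactorial (2 * r - 2 * (i + 1) - 1) : ℝ) := by
    rw [show 2 * r - 2 * i - 1 = 2 * r - 2 * (i + 1) + 1 by omega, Nat.doubleFactorial_add_one]
    push_cast [Nat.cast_sub (show 2 * (i + 1) ≤ 2 * r by omega)]
    ring
  have hden : (Nat.doubleFactorial (2 * n - 2 * r - 2 * i + 1) : ℝ) =
      (2 * n - 2 * r - 2 * i + 1) *
        (Nat.doubleFactorial (2 * n - 2 * r - 2 * (i + 1) + 1) : ℝ) := by
    rw [show 2 * n - 2 * r - 2 * i + 1 = 2 * n - 2 * r - 2 * (i + 1) + 1 + 2 by omega,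
      Nat.doubleFactorial_add_two]
    push_cast [Nat.cast_sub (show 2 * (i + 1) ≤ 2 * n - 2 * r by omega),
      Nat.cast_sub (show 2 * r ≤ 2 * n by omega)]
    ring
  have hfac_ne : (2 * n - 2 * r - 2 * i + 1 : ℝ) ≠ 0 := by
    have hrn' : (2 * r : ℝ) ≤ n := by exact_mod_cast hrn
    have hi' : (i : ℝ) < r := by exact_mod_cast hi
    refine ne_of_gt ?_
    linarith [Nat.cast_nonneg (α := ℝ) i]
  have hden_ne := cast_doubleFactorial_ne_zero (2 * n - 2 * r - 2 * (i + 1) + 1)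
  rw [piCoeff, piCoeff, hnum, hden, div_mul_eq_mul_div, div_mul_eq_mul_div, ← neg_div,
    div_eq_div_iff hden_ne (mul_ne_zero hfac_ne hden_ne)]
  ring

theorem piBase_apply_zero (n r : ℕ) :
    piBase n r (Idx.mk (k := 2 * r) (p := 0) (by omega)) =
      (-1) ^ r * (Nat.doubleFactorial (2 * n - 4 * r + 1) : ℝ) * piCoeff n r 0 := by
  simp [piBase_eq_smul_sum_piCoeff, e_apply_mk]

theorem piBase_ne_zero (n r : ℕ) : piBase n r ≠ 0 := by
  intro h
  have happly := piBase_apply_zero n r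
  rw [h, Finsupp.zero_apply] at happly
  exact mul_ne_zero (mul_ne_zero (pow_ne_zero _ (by norm_num)) (cast_doubleFactorial_ne_zero _))
    (piCoeff_ne_zero n r 0) happly.symm

theorem opH_piBase (n r : ℕ) : opH n (piBase n r) = (4 * r - 2 * n : ℝ) • piBase n r := by
  have hterm (i : ℕ) : opH n (piCoeff n r i • e (2 * r) i) =
      (4 * r - 2 * n : ℝ) • piCoeff n r i • e (2 * r) i := by
    rw [map_smul, opH_e]
    push_cast
    module
  simp only [piBase_eq_smul_sum_piCoeff, map_smul _ (_ * _), map_sum, hterm]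
  rw [← Finset.smul_sum, smul_comm]

theorem opLam_piCoeff_smul_e {n r i : ℕ} (hrn : 2 * r ≤ n) (hi : i ≤ r) :
    opLam n (piCoeff n r i • e (2 * r) i) =
      (piCoeff n r i * (2 * r - 2 * i + 1)) • e (2 * r - 1) (i - 1) -
        (piCoeff n r (i + 1) * (2 * r - 2 * i - 1)) • e (2 * r - 1) i := by
  rw [map_smul, opLam_e]
  obtain rfl | hlt := hi.eq_or_lt
  · rw [e_eq_zero (k := 2 * i - 1) (p := i) (by omega)]
    push_cast
    module
  · rw [piCoeff_succ_mul hrn hlt]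
    push_cast
    module

theorem opLam_piBase {n r : ℕ} (hrn : 2 * r ≤ n) : opLam n (piBase n r) = 0 := by
  let g (i : ℕ) : M := (piCoeff n r i * (2 * r - 2 * i + 1)) • e (2 * r - 1) (i - 1)
  have hterm : ∀ i ∈ Finset.range (r + 1),
      opLam n (piCoeff n r i • e (2 * r) i) = g i - g (i + 1) := by
    intro i hi
    rw [opLam_piCoeff_smul_e hrn (Finset.mem_range_succ_iff.1 hi)]
    simp only [g]
    push_cast
    rw [add_sub_cancel_right]
    module
  have hg_zero : g 0 = 0 := by
    simp only [g]
    rw [e_eq_zero (by omega), smul_zero]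
  have hg_last : g (r + 1) = 0 := by
    simp only [g]
    rw [e_eq_zero (by omega), smul_zero]
  rw [piBase_eq_smul_sum_piCoeff, map_smul, map_sum, Finset.sum_congr rfl hterm,
    Finset.sum_range_sub', hg_zero, hg_last, sub_zero, smul_zero]

section

attribute [local instance] LieRing.ofAssociativeRing

theorem isSl2Triple_opH_opL_opLam (n : ℕ) : IsSl2Triple (opH n) opL (opLam n) where
  h_ne_zero := opH_ne_zero n
  lie_e_f := lie_opL_opLam n
  lie_h_e_nsmul := lie_opH_opL n
  lie_h_f_nsmul := lie_opH_opLam n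

theorem hasPrimitiveVectorWith_piBase {n r : ℕ} (hrn : 2 * r ≤ n) :
    (isSl2Triple_opH_opL_opLam n).symm.HasPrimitiveVectorWith (piBase n r)
      (2 * n - 4 * r : ℝ) where
  ne_zero := piBase_ne_zero n r
  lie_h := by
    rw [neg_lie, Module.End.lie_apply, opH_piBase, ← neg_smul, neg_sub]
  lie_e := opLam_piBase hrn

theorem opLam_opL_pow_succ_piBase {n r : ℕ} (hrn : 2 * r ≤ n) (m : ℕ) :
    opLam n ((opL ^ (m + 1)) (piBase n r)) =
      ((m + 1) * (2 * n - 4 * r - m) : ℝ) • (opL ^ m) (piBase n r) := by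
  simpa only [LieModule.toEnd_module_end, LieHom.id_apply, Module.End.lie_apply] using
    (hasPrimitiveVectorWith_piBase hrn).lie_e_pow_succ_toEnd_f m

end

theorem stmt14 (n r : ℕ) (hrn : 2 * r ≤ n) :
    (∀ l : ℕ, 2 * r < l →
      opLam n (piElt n l r) =
        ((((l : ℤ) - 2 * r) * (2 * (n : ℤ) - 2 * r - l + 1) : ℤ) : ℝ) • piElt n (l - 1) r) ∧
    opLam n (piElt n (2 * r) r) = 0 := by
  refine ⟨fun l hl => ?_, ?_⟩
  · obtain ⟨m, rfl⟩ := Nat.exists_eq_add_of_lt hl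
    rw [piElt, piElt, show 2 * r + m + 1 - 2 * r = m + 1 by omega,
      show 2 * r + m + 1 - 1 - 2 * r = m by omega, opLam_opL_pow_succ_piBase hrn]
    congr 1
    push_cast
    ring
  · rw [piElt, Nat.sub_self, pow_zero, Module.End.one_apply, opLam_piBase hrn]
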